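/- Let M be a tropical oriented matroid with parameters (n,d) in general position. For each i ∈ [n] let I_i be a nonempty subset of [d] and let J_i = (J_{i,1}, …, J_{i,k_i}) be a partition of [d] into k_i nonempty blocks. Set M(I,J) = {A ∈ M : for all i ∈ [n], A_i ⊆ I_i and A_i ∩ J_{i,k} ≠ ∅ for all k ∈ [k_i]}. Then: (a) M(I,J) is convex, and hence connected if nonempty; (b) every A ∈ M(I,J) has dimension at most d + n − 1 − (k_1 + … + k_n); (c) for every A ∈ M(I,J) there exists B ∈ M(I,J) with B_i ⊆ A_i for all i ∈ [n] and with dimension exactly d + n − 1 − (k_1 + … + k_n). -/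

import Mathlib

/-- A step from `j` to `k` along an edge of the comparability graph `Γ(A,B)`,
traversed in an allowed direction: there is `i` with `j ∈ A i`, `k ∈ B i`, `j ≠ k`
(such an edge is undirected precisely when moreover `j ∈ B i` and `k ∈ A i`, and then
the reversed step is also of this form). -/
def CompStep {n d : ℕ} (A B : Fin n → Finset (Fin d)) (j k : Fin d) : Prop :=
  ∃ i, j ∈ A i ∧ k ∈ B i ∧ j ≠ k

/-- A traversal of a *directed* edge of `Γ(A,B)` in its given direction. -/
def CompDirStep {n d : ℕ} (A B : Fin n → Finset (Fin d)) (j k : Fin d) : Prop :=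
  ∃ i, j ∈ A i ∧ k ∈ B i ∧ j ≠ k ∧ ¬ (j ∈ B i ∧ k ∈ A i)

/-- The comparability graph `Γ(A,B)` is acyclic: there is no closed walk consisting
of legally traversed edges at least one of which is directed. -/
def CompAcyclic {n d : ℕ} (A B : Fin n → Finset (Fin d)) : Prop :=
  ¬ ∃ j k : Fin d, CompDirStep A B j k ∧ Relation.ReflTransGen (CompStep A B) k j

/-- An ordered partition of the ground set: a list of nonempty, pairwise disjoint
sets covering everything. -/
def IsOrderedPartition {α : Type*} [Fintype α] [DecidableEq α]
    (P : List (Finset α)) : Prop :=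
  (∀ p ∈ P, p.Nonempty) ∧ P.Pairwise Disjoint ∧ P.foldr (· ∪ ·) ∅ = Finset.univ

/-- `refineEntry s P = s ∩ P_{m}` where `m` is the first index with `s ∩ P_m ≠ ∅`. -/
def refineEntry {α : Type*} [DecidableEq α] (s : Finset α) :
    List (Finset α) → Finset α
  | [] => ∅
  | p :: rest => if (s ∩ p).Nonempty then s ∩ p else refineEntry s rest

/-- The refinement `A|_P` of a type `A` with respect to an ordered partition `P`. -/
def refineType {n d : ℕ} (A : Fin n → Finset (Fin d)) (P : List (Finset (Fin d))) :
    Fin n → Finset (Fin d) :=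
  fun i => refineEntry (A i) P

/-- `M` is a tropical oriented matroid with parameters `(n,d)`. -/
def IsTOM (n d : ℕ) (M : Set (Fin n → Finset (Fin d))) : Prop :=
  (∀ A ∈ M, ∀ i, (A i).Nonempty) ∧
  (∀ j : Fin d, (fun _ : Fin n => ({j} : Finset (Fin d))) ∈ M) ∧
  (∀ A ∈ M, ∀ B ∈ M, CompAcyclic A B) ∧
  (∀ A ∈ M, ∀ B ∈ M, ∀ j : Fin n, ∃ C ∈ M, C j = A j ∪ B j ∧
      ∀ k, C k = A k ∨ C k = B k ∨ C k = A k ∪ B k) ∧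
  (∀ A ∈ M, ∀ P : List (Finset (Fin d)), IsOrderedPartition P → refineType A P ∈ M)

/-- The type graph `K_A`: the bipartite graph on `N_1,…,N_n,D_1,…,D_d` with an edge
`{N_i, D_j}` whenever `j ∈ A_i`. -/
def typeGraph {n d : ℕ} (A : Fin n → Finset (Fin d)) : SimpleGraph (Fin n ⊕ Fin d) :=
  SimpleGraph.fromRel (fun x y =>
    match x, y with
    | Sum.inl i, Sum.inr j => j ∈ A i
    | _, _ => False)

/-- The dimension of a type: the number of connected components of `K_A` minus 1
(as an integer). -/
noncomputable def typeDim {n d : ℕ} (A : Fin n → Finset (Fin d)) : ℤ :=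
  (Nat.card (typeGraph A).ConnectedComponent : ℤ) - 1

/-- A tropical oriented matroid is in general position if all its type graphs are
acyclic. -/
def InGeneralPosition {n d : ℕ} (M : Set (Fin n → Finset (Fin d))) : Prop :=
  ∀ A ∈ M, (typeGraph A).IsAcyclic

/-- Two types are incident if one is an entrywise subset of the other. -/
def Incident {n d : ℕ} (X Y : Fin n → Finset (Fin d)) : Prop :=
  (∀ i, X i ⊆ Y i) ∨ (∀ i, Y i ⊆ X i)

/-- The combinatorial convex hull `M_{AB}` of two types within a collection `M`. -/
def Hull {n d : ℕ} (M : Set (Fin n → Finset (Fin d)))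
    (A B : Fin n → Finset (Fin d)) : Set (Fin n → Finset (Fin d)) :=
  {C | C ∈ M ∧ ∀ i, C i = A i ∨ C i = B i ∨ C i = A i ∪ B i}

/-- `X` and `Y` are joined by a finite sequence of types in `S` in which consecutive
types are incident. -/
def ConnectedIn {n d : ℕ} (S : Set (Fin n → Finset (Fin d)))
    (X Y : Fin n → Finset (Fin d)) : Prop :=
  Relation.ReflTransGen (fun U V => U ∈ S ∧ V ∈ S ∧ Incident U V) X Y

theorem refineEntry_levels {d : ℕ} (f : Fin d → ℕ) (s : Finset (Fin d)) (len : ℕ) :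
    ∀ a, (∀ x ∈ s, a ≤ f x) → (∃ x ∈ s, f x < a + len) →
    refineEntry s (((List.range' a len).map
      (fun m => Finset.univ.filter (fun x => f x = m))).filter (fun p => p.Nonempty)) =
      s.filter (fun x => ∀ y ∈ s, f x ≤ f y) := by
  induction len with
  | zero =>
    intro a h1 ⟨x, hx, hx2⟩
    have := h1 x hx
    omega
  | succ len ih =>
    intro a h1 ⟨x, hx, hx2⟩
    rw [List.range'_succ, List.map_cons]
    by_cases hne : ∃ y ∈ s, f y = a
    · obtain ⟨y, hy, hya⟩ := hne
      have hp : (Finset.univ.filter (fun x => f x = a)).Nonempty := ⟨y, by simp [hya]⟩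
      rw [List.filter_cons_of_pos (by simpa using hp)]
      have hq : (s ∩ Finset.univ.filter (fun x => f x = a)).Nonempty := ⟨y, by simp [hya, hy]⟩
      rw [refineEntry, if_pos hq]
      ext z
      simp only [Finset.mem_inter, Finset.mem_filter, Finset.mem_univ, true_and]
      constructor
      · rintro ⟨hz, hza⟩
        exact ⟨hz, fun w hw => by rw [hza]; exact h1 w hw⟩
      · rintro ⟨hz, hz2⟩
        refine ⟨hz, ?_⟩
        have := hz2 y hy
        have := h1 z hz
        omega
    · push Not at hne
      have key := ih (a + 1) (fun y hy => by
        have := h1 y hy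
        have := hne y hy
        omega) ⟨x, hx, by omega⟩
      by_cases hp : (Finset.univ.filter (fun x => f x = a)).Nonempty
      · rw [List.filter_cons_of_pos (by simpa using hp)]
        have hq : ¬ (s ∩ Finset.univ.filter (fun x => f x = a)).Nonempty := by
          rintro ⟨z, hz⟩
          simp only [Finset.mem_inter, Finset.mem_filter, Finset.mem_univ, true_and] at hz
          exact hne z hz.1 hz.2
        rw [refineEntry, if_neg hq]
        exact key
      · rw [List.filter_cons_of_neg (by simpa using hp)]
        exact key

theorem mem_foldr_union {α : Type*} [DecidableEq α] (P : List (Finset α)) (x : α) :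
    x ∈ P.foldr (· ∪ ·) ∅ ↔ ∃ p ∈ P, x ∈ p := by
  induction P with
  | nil => simp
  | cons p P ih => simp [ih]

theorem refine_level {n d : ℕ} {M : Set (Fin n → Finset (Fin d))} (hM : IsTOM n d M)
    {A : Fin n → Finset (Fin d)} (hA : A ∈ M) (f : Fin d → ℕ) :
    (fun i => (A i).filter (fun x => ∀ y ∈ A i, f x ≤ f y)) ∈ M := by
  obtain ⟨h1, -, -, -, h5⟩ := hM
  obtain ⟨N, hN⟩ : ∃ N, ∀ x, f x < N :=
    ⟨Finset.univ.sup f + 1, fun x => Nat.lt_succ_of_le (Finset.le_sup (Finset.mem_univ x))⟩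
  have := h5 A hA (((List.range' 0 N).map
      (fun m => Finset.univ.filter (fun x => f x = m))).filter (fun p => p.Nonempty)) ?_
  · convert this using 1
    funext i
    obtain ⟨x, hx⟩ := h1 A hA i
    exact (refineEntry_levels f (A i) N 0 (by simp) ⟨x, hx, by simpa using hN x⟩).symm
  · refine ⟨?_, ?_, ?_⟩
    · intro p hp
      simpa using (List.mem_filter.1 hp).2
    · apply List.Pairwise.filter
      rw [List.pairwise_map]
      refine (List.nodup_range' (s := 0) (n := N)).imp ?_
      intro a b hab
      rw [Finset.disjoint_left]
      intro x hx hx'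
      simp at hx hx'
      exact hab (hx.symm.trans hx')
    · ext x
      simp only [mem_foldr_union, Finset.mem_univ, iff_true]
      refine ⟨Finset.univ.filter (fun y => f y = f x), ?_, by simp⟩
      rw [List.mem_filter]
      refine ⟨List.mem_map.2 ⟨f x, ?_, rfl⟩, ?_⟩
      · simpa using hN x
      · exact decide_eq_true ⟨x, by simp⟩

theorem inter_mem {n d : ℕ} {M : Set (Fin n → Finset (Fin d))} (hM : IsTOM n d M)
    {A B : Fin n → Finset (Fin d)} (hA : A ∈ M) (hB : B ∈ M)
    (h : ∀ i, A i ⊆ B i ∨ B i ⊆ A i) : (fun i => A i ∩ B i) ∈ M := by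
  classical
  have hac := hM.2.2.1 A hA B hB
  have hBne := hM.1 B hB
  let r := Relation.ReflTransGen (CompStep A B)
  let f : Fin d → ℕ := fun x => (Finset.univ.filter (fun y => r x y)).card
  have hmono : ∀ x y, r x y → f y ≤ f x := by
    intro x y hxy
    apply Finset.card_le_card
    intro z hz
    simp only [Finset.mem_filter, Finset.mem_univ, true_and] at hz ⊢
    exact hxy.trans hz
  have hstrict : ∀ x y, r x y → ¬ r y x → f y < f x := by
    intro x y hxy hyx
    apply Finset.card_lt_card
    rw [Finset.ssubset_iff_of_subset]
    · exact ⟨x, Finset.mem_filter.2 ⟨Finset.mem_univ _, Relation.ReflTransGen.refl⟩,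
        fun hh => hyx (Finset.mem_filter.1 hh).2⟩
    · intro z hz
      simp only [Finset.mem_filter, Finset.mem_univ, true_and] at hz ⊢
      exact hxy.trans hz
  have hstep : ∀ i, ∀ x ∈ A i, ∀ y ∈ B i, r x y := by
    intro i x hx y hy
    by_cases hxy : x = y
    · rw [hxy]
    · exact Relation.ReflTransGen.single ⟨i, hx, hy, hxy⟩
  convert refine_level hM hA f using 1
  funext i
  ext x
  simp only [Finset.mem_inter, Finset.mem_filter]
  constructor
  · rintro ⟨hxA, hxB⟩
    exact ⟨hxA, fun y hy => hmono _ _ (hstep i y hy x hxB)⟩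
  · rintro ⟨hxA, hx⟩
    refine ⟨hxA, ?_⟩
    by_contra hxB
    rcases h i with h | h
    · exact hxB (h hxA)
    · obtain ⟨y, hy⟩ := hBne i
      have h1 := hx y (h hy)
      have h2 := hstrict x y (hstep i x hxA y hy) (fun hr =>
        hac ⟨x, y, ⟨i, hxA, hy, fun e => hxB (e ▸ hy), fun hh => hxB hh.1⟩, hr⟩)
      omega

theorem connected_of_convex {n d : ℕ} {M : Set (Fin n → Finset (Fin d))} (hM : IsTOM n d M)
    {S : Set (Fin n → Finset (Fin d))} (hS : S ⊆ M)
    (hconv : ∀ A ∈ S, ∀ B ∈ S, Hull M A B ⊆ S) (N : ℕ) :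
    ∀ A ∈ S, ∀ B ∈ S,
      (Finset.univ.filter (fun i => ¬ (A i ⊆ B i ∨ B i ⊆ A i))).card ≤ N →
      ConnectedIn S A B := by
  induction N with
  | zero =>
    intro A hA B hB h
    have h' : ∀ i, A i ⊆ B i ∨ B i ⊆ A i := by
      intro i
      by_contra hi
      have : i ∈ (Finset.univ.filter (fun i => ¬ (A i ⊆ B i ∨ B i ⊆ A i))) := by
        simpa using hi
      have := Finset.card_pos.2 ⟨i, this⟩
      omega
    have hC : (fun i => A i ∩ B i) ∈ S := by
      apply hconv A hA B hB
      refine ⟨inter_mem hM (hS hA) (hS hB) h', fun i => ?_⟩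
      rcases h' i with h | h
      · left; exact Finset.inter_eq_left.2 h
      · right; left; exact Finset.inter_eq_right.2 h
    exact (Relation.ReflTransGen.single
      ⟨hA, hC, Or.inr fun i => Finset.inter_subset_left⟩).tail
      ⟨hC, hB, Or.inl fun i => Finset.inter_subset_right⟩
  | succ N ih =>
    intro A hA B hB h
    by_cases hj : ∃ j, ¬ (A j ⊆ B j ∨ B j ⊆ A j)
    · obtain ⟨j, hj⟩ := hj
      obtain ⟨C, hCM, hCj, hC⟩ := hM.2.2.2.1 A (hS hA) B (hS hB) j
      have hCS : C ∈ S := hconv A hA B hB ⟨hCM, hC⟩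
      have hmem : j ∈ (Finset.univ.filter (fun i => ¬ (A i ⊆ B i ∨ B i ⊆ A i))) := by
        simpa using hj
      refine Relation.ReflTransGen.trans (b := C) (ih A hA C hCS ?_) (ih C hCS B hB ?_)
      all_goals
        refine Nat.le_of_lt_succ (lt_of_lt_of_le (Finset.card_lt_card ?_) h)
        rw [Finset.ssubset_iff_of_subset]
        · exact ⟨j, hmem, by simp [hCj]⟩
        · intro i hi
          simp only [Finset.mem_filter, Finset.mem_univ, true_and] at hi ⊢
          rcases hC i with h | h | h <;> rw [h] at hi <;> simp_all
    · push Not at hj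
      refine ih A hA B hB ?_
      rw [Finset.filter_false_of_mem]
      · simp
      · intro i _ hi
        exact hi (hj i)

theorem reach_delete {V : Type*} (G : SimpleGraph V) (u v x y : V) (h : G.Reachable x y) :
    (G.deleteEdges {s(u, v)}).Reachable x y ∨
    ((G.deleteEdges {s(u, v)}).Reachable x u ∧ (G.deleteEdges {s(u, v)}).Reachable v y) ∨
    ((G.deleteEdges {s(u, v)}).Reachable x v ∧ (G.deleteEdges {s(u, v)}).Reachable u y) := by
  obtain ⟨p⟩ := h
  induction p with
  | nil => exact Or.inl (SimpleGraph.Reachable.refl _)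
  | @cons a b c hab p ih =>
    by_cases he : s(a, b) = s(u, v)
    · rw [Sym2.eq_iff] at he
      rcases he with ⟨rfl, rfl⟩ | ⟨rfl, rfl⟩
      · rcases ih with h | h | h
        · exact Or.inr (Or.inl ⟨SimpleGraph.Reachable.refl _, h⟩)
        · exact Or.inr (Or.inl ⟨SimpleGraph.Reachable.refl _, h.2⟩)
        · exact Or.inl h.2
      · rcases ih with h | h | h
        · exact Or.inr (Or.inr ⟨SimpleGraph.Reachable.refl _, h⟩)
        · exact Or.inl h.2
        · exact Or.inr (Or.inr ⟨SimpleGraph.Reachable.refl _, h.2⟩)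
    · have hab' : (G.deleteEdges {s(u, v)}).Reachable a b := by
        apply SimpleGraph.Adj.reachable
        rw [SimpleGraph.deleteEdges_adj]
        exact ⟨hab, by simpa using he⟩
      rcases ih with h | h | h
      · exact Or.inl (hab'.trans h)
      · exact Or.inr (Or.inl ⟨hab'.trans h.1, h.2⟩)
      · exact Or.inr (Or.inr ⟨hab'.trans h.1, h.2⟩)

theorem card_cc_delete {V : Type*} [Finite V] (G : SimpleGraph V) (u v : V) (hadj : G.Adj u v)
    (hb : ¬ (G.deleteEdges {s(u, v)}).Reachable u v) :
    Nat.card (G.deleteEdges {s(u, v)}).ConnectedComponent =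
      Nat.card G.ConnectedComponent + 1 := by
  classical
  set H := G.deleteEdges {s(u, v)} with hH
  have hle : H ≤ G := G.deleteEdges_le _
  let φ : {c : H.ConnectedComponent // c ≠ H.connectedComponentMk v} → G.ConnectedComponent :=
    fun c => c.1.map (SimpleGraph.Hom.ofLE hle)
  have hφ : Function.Bijective φ := by
    constructor
    · rintro ⟨c, hc⟩ ⟨c', hc'⟩ h
      induction c using SimpleGraph.ConnectedComponent.ind with | _ x
      induction c' using SimpleGraph.ConnectedComponent.ind with | _ y
      have hc1 : ¬ H.Reachable x v := fun h => hc (SimpleGraph.ConnectedComponent.eq.2 h)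
      have hc2 : ¬ H.Reachable y v := fun h => hc' (SimpleGraph.ConnectedComponent.eq.2 h)
      have h' : G.Reachable x y := SimpleGraph.ConnectedComponent.eq.1 h
      rw [Subtype.mk.injEq, SimpleGraph.ConnectedComponent.eq]
      rcases reach_delete G u v x y h' with h | h | h
      · exact h
      · exact absurd h.2.symm hc2
      · exact absurd h.1 hc1
    · intro C
      induction C using SimpleGraph.ConnectedComponent.ind with | _ x
      by_cases hx : H.Reachable x v
      · refine ⟨⟨H.connectedComponentMk u, fun h => hb (SimpleGraph.ConnectedComponent.eq.1 h)⟩, ?_⟩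
        exact SimpleGraph.ConnectedComponent.eq.2 (hadj.reachable.trans (hx.mono hle).symm)
      · exact ⟨⟨H.connectedComponentMk x, fun h => hx (SimpleGraph.ConnectedComponent.eq.1 h)⟩, rfl⟩
  rw [← Nat.card_congr (Equiv.ofBijective φ hφ)]
  have := Fintype.ofFinite H.ConnectedComponent
  rw [Nat.card_eq_fintype_card, Nat.card_eq_fintype_card, Fintype.card_subtype_compl,
    Fintype.card_subtype_eq]
  have : 0 < Fintype.card H.ConnectedComponent := Fintype.card_pos_iff.2 ⟨H.connectedComponentMk v⟩
  omega

theorem tg_adj {n d : ℕ} (A : Fin n → Finset (Fin d)) (i : Fin n) (j : Fin d) :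
    (typeGraph A).Adj (Sum.inl i) (Sum.inr j) ↔ j ∈ A i := by
  simp [typeGraph]

/-- remove one element -/
def rem {n d : ℕ} (A : Fin n → Finset (Fin d)) (i : Fin n) (j : Fin d) : Fin n → Finset (Fin d) :=
  Function.update A i ((A i).erase j)

theorem mem_rem {n d : ℕ} (A : Fin n → Finset (Fin d)) (i : Fin n) (j : Fin d) (i' : Fin n)
    (k : Fin d) : k ∈ rem A i j i' ↔ k ∈ A i' ∧ ¬ (i' = i ∧ k = j) := by
  unfold rem
  by_cases h : i' = i
  · subst h; simp [and_comm]
  · simp [h]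

theorem sum_rem {n d : ℕ} (A : Fin n → Finset (Fin d)) (i : Fin n) (j : Fin d) (hj : j ∈ A i) :
    ∑ k, (rem A i j k).card + 1 = ∑ k, (A k).card := by
  rw [← Finset.add_sum_erase _ _ (Finset.mem_univ i),
    ← Finset.add_sum_erase (a := i) _ (fun k => (A k).card) (Finset.mem_univ i)]
  have h1 : (rem A i j i).card + 1 = (A i).card := by
    simp [rem, Finset.card_erase_add_one hj]
  have h2 : ∑ k ∈ Finset.univ.erase i, (rem A i j k).card
      = ∑ k ∈ Finset.univ.erase i, (A k).card := by
    apply Finset.sum_congr rfl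
    intro k hk
    simp [rem, Finset.ne_of_mem_erase hk]
  omega

theorem tg_rem {n d : ℕ} (A : Fin n → Finset (Fin d)) (i : Fin n) (j : Fin d) :
    typeGraph (rem A i j) = (typeGraph A).deleteEdges {s(Sum.inl i, Sum.inr j)} := by
  ext x y
  rcases x with x | x <;> rcases y with y | y <;>
    simp [typeGraph, mem_rem] <;> tauto

theorem card_cc {n d : ℕ} (N : ℕ) : ∀ A : Fin n → Finset (Fin d), (typeGraph A).IsAcyclic →
    ∑ i, (A i).card = N → Nat.card (typeGraph A).ConnectedComponent + N = n + d := by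
  induction N with
  | zero =>
    intro A _ h
    have hA : ∀ i, A i = ∅ := by
      intro i
      have := Finset.sum_eq_zero_iff.1 h i (Finset.mem_univ i)
      exact Finset.card_eq_zero.1 this
    have hG : typeGraph A = ⊥ := by
      ext x y
      rcases x with x | x <;> rcases y with y | y <;> simp [typeGraph, hA]
    rw [hG]
    have : Function.Bijective (⊥ : SimpleGraph (Fin n ⊕ Fin d)).connectedComponentMk := by
      constructor
      · intro x y h
        simpa using SimpleGraph.ConnectedComponent.eq.1 h
      · intro C
        induction C using SimpleGraph.ConnectedComponent.ind with | _ x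
        exact ⟨x, rfl⟩
    rw [← Nat.card_congr (Equiv.ofBijective _ this)]
    simp
  | succ N ih =>
    intro A hA h
    have : ∃ i, (A i).Nonempty := by
      by_contra hcon
      push Not at hcon
      simp [hcon] at h
    obtain ⟨i, j, hj⟩ := this
    have hadj := (tg_adj A i j).2 hj
    have hb := SimpleGraph.isAcyclic_iff_forall_adj_isBridge.1 hA hadj
    rw [SimpleGraph.isBridge_iff] at hb
    have h1 := card_cc_delete _ _ _ hadj hb
    have h2 := sum_rem A i j hj
    have h3 := ih (rem A i j) (by
      rw [tg_rem]; exact hA.anti (SimpleGraph.deleteEdges_le _)) (by omega)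
    rw [tg_rem] at h3
    omega

theorem dim_eq {n d : ℕ} (A : Fin n → Finset (Fin d)) (h : (typeGraph A).IsAcyclic) :
    typeDim A = (d : ℤ) + n - 1 - ∑ i, ((A i).card : ℤ) := by
  have := card_cc _ A h rfl
  unfold typeDim
  have h2 : (∑ i, ((A i).card : ℤ)) = ((∑ i, (A i).card : ℕ) : ℤ) := by push_cast; rfl
  rw [h2]
  omega

theorem rem_mem {n d : ℕ} {M : Set (Fin n → Finset (Fin d))} (hM : IsTOM n d M)
    (hgen : InGeneralPosition M) {A : Fin n → Finset (Fin d)} (hA : A ∈ M) (i : Fin n)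
    (j j' : Fin d) (hj : j ∈ A i) (hj' : j' ∈ A i) (hne : j ≠ j') : rem A i j ∈ M := by
  classical
  have hadj := (tg_adj A i j).2 hj
  have hb := SimpleGraph.isAcyclic_iff_forall_adj_isBridge.1 (hgen A hA) hadj
  rw [SimpleGraph.isBridge_iff, ← tg_rem] at hb
  set H := typeGraph (rem A i j)
  have hmk : ∀ i' k, k ∈ A i' → ¬ (i' = i ∧ k = j) → H.Reachable (Sum.inl i') (Sum.inr k) :=
    fun i' k h1 h2 => ((tg_adj _ _ _).2 ((mem_rem A i j i' k).2 ⟨h1, h2⟩)).reachable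
  let f : Fin d → ℕ := fun k => if H.Reachable (Sum.inr j) (Sum.inr k) then 1 else 0
  convert refine_level hM hA f using 1
  funext i'
  ext k
  rw [mem_rem, Finset.mem_filter]
  refine and_congr_right fun hk => ?_
  by_cases hi : i' = i
  · subst hi
    have hzero : ∀ k ∈ A i', k ≠ j → f k = 0 := by
      intro k hk hkj
      refine if_neg fun hr => hb ?_
      exact (hmk i' k hk (by simp [hkj])).trans hr.symm
    have hone : f j = 1 := if_pos (SimpleGraph.Reachable.refl _)
    constructor
    · intro h y hy
      rw [hzero k hk (by simpa using h)]
      exact Nat.zero_le _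
    · rintro h ⟨-, rfl⟩
      have := h j' hj'
      rw [hone, hzero j' hj' hne.symm] at this
      omega
  · simp only [hi, false_and, not_false_eq_true, true_iff]
    intro y hy
    have hky := (hmk i' k hk (by simp [hi])).symm.trans (hmk i' y hy (by simp [hi]))
    have : f k = f y := by
      have : H.Reachable (Sum.inr j) (Sum.inr k) ↔ H.Reachable (Sum.inr j) (Sum.inr y) :=
        ⟨fun h => h.trans hky, fun h => h.trans hky.symm⟩
      simp only [f, this]
    exact this.le

theorem block_card {d : ℕ} (s : Finset (Fin d)) (J : Finset (Finset (Fin d)))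
    (hdisj : ∀ p ∈ J, ∀ q ∈ J, p ≠ q → Disjoint p q) (hcov : J.biUnion id = Finset.univ) :
    s.card = ∑ p ∈ J, (s ∩ p).card := by
  rw [← Finset.card_biUnion]
  · congr 1
    ext x
    have : x ∈ J.biUnion id := by rw [hcov]; exact Finset.mem_univ x
    simp only [Finset.mem_biUnion, id, Finset.mem_inter] at this ⊢
    obtain ⟨p, hp, hx⟩ := this
    exact ⟨fun h => ⟨p, hp, h, hx⟩, fun ⟨_, _, h, _⟩ => h⟩
  · intro p hp q hq hpq
    exact (hdisj p hp q hq hpq).mono Finset.inter_subset_right Finset.inter_subset_right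

theorem stmt_5 {n d : ℕ} (M : Set (Fin n → Finset (Fin d)))
    (hM : IsTOM n d M) (hgen : InGeneralPosition M)
    (I : Fin n → Finset (Fin d)) (hI : ∀ i, (I i).Nonempty)
    (J : Fin n → Finset (Finset (Fin d)))
    (hJne : ∀ i, ∀ p ∈ J i, p.Nonempty)
    (hJdisj : ∀ i, ∀ p ∈ J i, ∀ q ∈ J i, p ≠ q → Disjoint p q)
    (hJcov : ∀ i, (J i).biUnion id = Finset.univ) :
    -- `M(I,J)`
    let MIJ : Set (Fin n → Finset (Fin d)) :=
      {A | A ∈ M ∧ ∀ i, A i ⊆ I i ∧ ∀ p ∈ J i, (A i ∩ p).Nonempty}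
    -- (a) `M(I,J)` is convex (hence connected if nonempty)
    ((∀ A ∈ MIJ, ∀ B ∈ MIJ, Hull M A B ⊆ MIJ) ∧
      (∀ A ∈ MIJ, ∀ B ∈ MIJ, ConnectedIn MIJ A B)) ∧
    -- (b) dimension bound
    (∀ A ∈ MIJ, typeDim A ≤ (d : ℤ) + n - 1 - ∑ i : Fin n, ((J i).card : ℤ)) ∧
    -- (c) existence of a maximal-dimensional refinement below any element
    (∀ A ∈ MIJ, ∃ B ∈ MIJ, (∀ i, B i ⊆ A i) ∧
      typeDim B = (d : ℤ) + n - 1 - ∑ i : Fin n, ((J i).card : ℤ)) := by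
  intro MIJ
  have hcard : ∀ A ∈ MIJ, ∀ i, (J i).card ≤ (A i).card := by
    intro A hA i
    rw [block_card (A i) (J i) (hJdisj i) (hJcov i), Finset.card_eq_sum_ones]
    exact Finset.sum_le_sum fun p hp => Finset.card_pos.2 ((hA.2 i).2 p hp)
  have hconv : ∀ A ∈ MIJ, ∀ B ∈ MIJ, Hull M A B ⊆ MIJ := by
    rintro A ⟨hA, hA'⟩ B ⟨hB, hB'⟩ C ⟨hC, hC'⟩
    refine ⟨hC, fun i => ?_⟩
    rcases hC' i with h | h | h <;> rw [h]
    · exact hA' i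
    · exact hB' i
    · refine ⟨Finset.union_subset (hA' i).1 (hB' i).1, fun p hp => ?_⟩
      exact ((hA' i).2 p hp).mono (Finset.inter_subset_inter_right Finset.subset_union_left)
  refine ⟨⟨hconv, fun A hA B hB => ?_⟩, ?_, ?_⟩
  · exact connected_of_convex hM (fun A hA => hA.1) hconv _ A hA B hB le_rfl
  · intro A hA
    rw [dim_eq A (hgen A hA.1)]
    have : ∑ i : Fin n, ((J i).card : ℤ) ≤ ∑ i : Fin n, ((A i).card : ℤ) :=
      Finset.sum_le_sum fun i _ => by exact_mod_cast hcard A hA i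
    linarith
  · have key : ∀ N : ℕ, ∀ A ∈ MIJ, ∑ i, (A i).card = N → ∃ B ∈ MIJ, (∀ i, B i ⊆ A i) ∧
        ∀ i, (B i).card = (J i).card := by
      intro N
      induction N with
      | zero =>
        intro A hA h
        refine ⟨A, hA, fun i => Finset.Subset.refl _, fun i => ?_⟩
        have h1 := Finset.sum_eq_zero_iff.1 h i (Finset.mem_univ i)
        have h2 := hcard A hA i
        omega
      | succ N ih =>
        intro A hA h
        by_cases hall : ∀ i, (A i).card = (J i).card
        · exact ⟨A, hA, fun i => Finset.Subset.refl _, hall⟩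
        · push Not at hall
          obtain ⟨i, hi⟩ := hall
          have hlt : (J i).card < (A i).card := lt_of_le_of_ne (hcard A hA i) hi.symm
          rw [block_card (A i) (J i) (hJdisj i) (hJcov i), Finset.card_eq_sum_ones] at hlt
          obtain ⟨p, hp, hlt⟩ := Finset.exists_lt_of_sum_lt hlt
          obtain ⟨j, hj, j', hj', hne⟩ := Finset.one_lt_card.1 hlt
          rw [Finset.mem_inter] at hj hj'
          have hsub : ∀ i', rem A i j i' ⊆ A i' := fun i' k hk => ((mem_rem A i j i' k).1 hk).1
          have hB : rem A i j ∈ MIJ := by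
            refine ⟨rem_mem hM hgen hA.1 i j j' hj.1 hj'.1 hne, fun i' => ?_⟩
            refine ⟨(hsub i').trans (hA.2 i').1, fun q hq => ?_⟩
            obtain ⟨x, hx⟩ := (hA.2 i').2 q hq
            rw [Finset.mem_inter] at hx
            by_cases hxj : i' = i ∧ x = j
            · obtain ⟨rfl, rfl⟩ := hxj
              have hpq : p = q := by
                by_contra hpq
                exact Finset.disjoint_left.1 (hJdisj i' p hp q hq hpq) hj.2 hx.2
              subst hpq
              exact ⟨j', Finset.mem_inter.2 ⟨(mem_rem _ _ _ _ _).2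
                ⟨hj'.1, fun hh => hne hh.2.symm⟩, hj'.2⟩⟩
            · exact ⟨x, Finset.mem_inter.2 ⟨(mem_rem _ _ _ _ _).2 ⟨hx.1, hxj⟩, hx.2⟩⟩
          have hsum := sum_rem A i j hj.1
          obtain ⟨B, hB1, hB2, hB3⟩ := ih _ hB (by omega)
          exact ⟨B, hB1, fun i' => (hB2 i').trans (hsub i'), hB3⟩
    intro A hA
    obtain ⟨B, hB1, hB2, hB3⟩ := key _ A hA rfl
    refine ⟨B, hB1, hB2, ?_⟩
    rw [dim_eq B (hgen B hB1.1)]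
    simp only [hB3]
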